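/- Let H₀, H₁, …, H_k be a wire of 7-suns and let G be a preimage of the wire. Then for each i, the subgraph T⁻¹(H_i) of G is isomorphic to the 7-wheel W₇ or the squared 7-cycle C₇², and T⁻¹(H_i) is isomorphic to T⁻¹(H₀) if and only if i is even. -/

import Mathlib

open SimpleGraph

/-- The triangular line graph `T(G)` of a graph `G`: vertices are the edges of `G`,
with two edges adjacent iff they share an endpoint and lie in a common triangle. -/
def TriLine {V : Type*} (G : SimpleGraph V) : SimpleGraph G.edgeSet where
  Adj e₁ e₂ := ∃ u v w : V, G.Adj u v ∧ G.Adj v w ∧ G.Adj u w ∧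
      (e₁ : Sym2 V) = s(u, v) ∧ (e₂ : Sym2 V) = s(v, w)
  symm := by
    constructor
    rintro e₁ e₂ ⟨u, v, w, huv, hvw, huw, h₁, h₂⟩
    exact ⟨w, v, u, hvw.symm, huv.symm, huw.symm, by rw [h₂]; exact Sym2.eq_swap,
      by rw [h₁]; exact Sym2.eq_swap⟩
  loopless := by
    constructor
    rintro e ⟨u, v, w, huv, hvw, huw, h₁, h₂⟩
    rw [h₁, Sym2.eq_iff] at h₂
    rcases h₂ with ⟨h, _⟩ | ⟨h, _⟩
    · exact huv.ne h
    · exact huw.ne h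

/-- `H` is a triangular line graph: it is isomorphic to `T(G)` for some finite graph `G`. -/
def IsTriLineGraph {W : Type*} (H : SimpleGraph W) : Prop :=
  ∃ (V : Type) (_ : Fintype V) (G : SimpleGraph V), Nonempty (TriLine G ≃g H)

/-- Given a preimage `G` of `H` (via the isomorphism `f : T(G) ≃g H`) and a set `S` of
vertices of `H`, this is the subgraph of `G` consisting of the edges of `G` corresponding
to the vertices in `S` (together with their endpoints); i.e. `T⁻¹(S)`. -/
def edgePre {V W : Type*} (G : SimpleGraph V) {H : SimpleGraph W}
    (f : TriLine G ≃g H) (S : Set W) : G.Subgraph where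
  verts := {v | ∃ (u : V) (e : G.edgeSet), (e : Sym2 V) = s(v, u) ∧ (f e : W) ∈ S}
  Adj a b := G.Adj a b ∧ ∃ e : G.edgeSet, (e : Sym2 V) = s(a, b) ∧ (f e : W) ∈ S
  adj_sub h := h.1
  edge_vert := by
    rintro a b ⟨h, e, he, hS⟩
    exact ⟨b, e, he, hS⟩
  symm := by
    constructor
    rintro a b ⟨h, e, he, hS⟩
    exact ⟨h.symm, e, he.trans Sym2.eq_swap, hS⟩

/-- `A` occurs as a (not necessarily induced) subgraph of `B`. -/
def HasSubgraphIso {α β : Type*} (A : SimpleGraph α) (B : SimpleGraph β) : Prop :=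
  ∃ f : α → β, Function.Injective f ∧ ∀ a b, A.Adj a b → B.Adj (f a) (f b)

/-- Glue a graph along an identification relation `R`: the quotient graph on
the quotient of the vertex set by the equivalence generated by `R`. -/
def Glue {ι : Type*} (G : SimpleGraph ι) (R : ι → ι → Prop) :
    SimpleGraph (Quotient (Relation.EqvGen.setoid R)) :=
  SimpleGraph.fromRel (fun x y => ∃ a b : ι, G.Adj a b ∧ x = Quotient.mk _ a ∧ y = Quotient.mk _ b)

/-- The `k`-wheel: a `k`-cycle plus a dominating center vertex (`none`). -/
def wheelGraph (k : ℕ) : SimpleGraph (Option (ZMod k)) :=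
  SimpleGraph.fromRel (fun a b =>
    (∃ i : ZMod k, a = some i ∧ b = some (i + 1)) ∨ (a = none ∧ b ≠ none))

/-- The squared `k`-cycle: a `k`-cycle plus edges between vertices at distance two. -/
def squaredCycleGraph (k : ℕ) : SimpleGraph (ZMod k) :=
  SimpleGraph.fromRel (fun i j => j = i + 1 ∨ j = i + 2)

/-- The `k`-sun: a `k`-cycle (the `Sum.inl` vertices), with a new vertex (`Sum.inr i`)
for each cycle edge `{i, i+1}`, adjacent to both its endpoints. -/
def sunGraph (k : ℕ) : SimpleGraph (ZMod k ⊕ ZMod k) :=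
  SimpleGraph.fromRel (fun a b => ∃ i : ZMod k,
    (a = Sum.inl i ∧ b = Sum.inl (i + 1)) ∨
    (a = Sum.inr i ∧ b = Sum.inl i) ∨
    (a = Sum.inr i ∧ b = Sum.inl (i + 1)))

/-- Vertex type of a 7-sun: `Sum.inl i` are the cycle vertices `cᵢ`, and `Sum.inr i` is
the degree-two vertex `pᵢ` attached to the cycle edge `{cᵢ, cᵢ₊₁}`. -/
abbrev SunV : Type := ZMod 7 ⊕ ZMod 7

/-- `k + 1` disjoint copies `H₀, …, H_k` of the 7-sun. -/
def wireBase (k : ℕ) : SimpleGraph (Fin (k + 1) × SunV) :=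
  SimpleGraph.fromRel (fun a b => a.1 = b.1 ∧ (sunGraph 7).Adj a.2 b.2)

/-- The wire identifications: for each `i`, the ROOT bowtie `{c₀,c₁,c₂,p₀,p₁}`
(center `c₁`) of `H_{i+1}` is identified with the NOT-attachment bowtie
`{c₄,c₅,c₆,p₄,p₅}` (center `c₅`) of `H_i` via a NOT gadget: centers `c₅ ~ c₁'`;
one pair of triangles on-on: `c₄ ~ c₀'`, `p₄ ~ p₀'`; the other pair crossed:
`p₅ ~ c₂'`, `c₆ ~ p₁'`. -/
def wireRel (k : ℕ) : (Fin (k + 1) × SunV) → (Fin (k + 1) × SunV) → Prop := fun x y =>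
  ∃ i : Fin k,
    (x = (i.castSucc, Sum.inl 5) ∧ y = (i.succ, Sum.inl 1)) ∨
    (x = (i.castSucc, Sum.inl 4) ∧ y = (i.succ, Sum.inl 0)) ∨
    (x = (i.castSucc, Sum.inr 4) ∧ y = (i.succ, Sum.inr 0)) ∨
    (x = (i.castSucc, Sum.inr 5) ∧ y = (i.succ, Sum.inl 2)) ∨
    (x = (i.castSucc, Sum.inl 6) ∧ y = (i.succ, Sum.inr 1))

/-- The wire `H₀, H₁, …, H_k`: a chain of `k + 1` 7-suns, each attached at its ROOT
bowtie to its predecessor via a NOT gadget. -/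
def wireGraph (k : ℕ) : SimpleGraph (Quotient (Relation.EqvGen.setoid (wireRel k))) :=
  Glue (wireBase k) (wireRel k)

/-- The vertices of the wire coming from the `i`-th 7-sun `H_i`. -/
def wireVerts (k : ℕ) (i : Fin (k + 1)) :
    Set (Quotient (Relation.EqvGen.setoid (wireRel k))) :=
  Set.range (fun v : SunV => Quotient.mk _ (i, v))


/-- boolean adjacency of the sun -/
def sadj : SunV → SunV → Bool
  | .inl i, .inl j => decide (j = i + 1) || decide (i = j + 1)
  | .inl i, .inr j => decide (i = j) || decide (i = j + 1)
  | .inr j, .inl i => decide (i = j) || decide (i = j + 1)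
  | .inr _, .inr _ => false

theorem sun_adj (u v : SunV) : (sunGraph 7).Adj u v ↔ sadj u v = true := by
  have h1 : ∀ i : ZMod 7, i ≠ i + 1 := by decide
  rcases u with i | i <;> rcases v with j | j <;>
    simp [sunGraph, sadj, SimpleGraph.fromRel_adj]
  · rintro h rfl
    rcases h with h | h <;> exact h1 _ h
  all_goals
    constructor
    · rintro ⟨l, ⟨rfl, rfl⟩ | ⟨rfl, rfl⟩⟩ <;> simp
    · rintro (rfl | rfl)
      · exact ⟨_, .inl ⟨rfl, rfl⟩⟩
      · exact ⟨_, .inr ⟨rfl, rfl⟩⟩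

structure Dat {V : Type} (e : SunV → Sym2 V) (v x y : ZMod 7 → V) (s : ZMod 7 → Bool) : Prop where
  hc : ∀ j, e (.inl j) = s(v j, x j)
  hp : ∀ j, e (.inr j) = s(x j, y j)
  hs : ∀ j, (s j = true ∧ v (j+1) = v j ∧ x (j+1) = y j) ∨
    (s j = false ∧ v (j+1) = y j ∧ x (j+1) = v j)
  inj : Function.Injective e
  nc : ∀ j, v j ≠ x j
  np : ∀ j, x j ≠ y j
  tri : ∀ u w z a b c, e u = s(a, b) → e w = s(b, c) → e z = s(a, c) → sadj u w = true

theorem sadj_rot (r : ZMod 7) (u w : SunV) :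
    sadj (Sum.map (· + r) (· + r) u) (Sum.map (· + r) (· + r) w) = sadj u w := by
  have h : ∀ i j : ZMod 7, (j + r = i + r + 1 ↔ j = i + 1) := by
    intro i j
    rw [show i + r + 1 = (i + 1) + r by ring]
    exact add_left_inj r
  rcases u with i | i <;> rcases w with j | j <;> simp [sadj, h]

theorem Dat.rot {V : Type} {e : SunV → Sym2 V} {v x y : ZMod 7 → V} {s : ZMod 7 → Bool}
    (D : Dat e v x y s) (r : ZMod 7) :
    Dat (fun u => e (Sum.map (· + r) (· + r) u)) (fun j => v (j + r)) (fun j => x (j + r))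
      (fun j => y (j + r)) (fun j => s (j + r)) where
  hc j := D.hc _
  hp j := D.hp _
  hs j := by
    have := D.hs (j + r)
    rwa [show j + r + 1 = j + 1 + r by ring] at this
  inj := D.inj.comp ((add_left_injective r).sumMap (add_left_injective r))
  nc j := D.nc _
  np j := D.np _
  tri u w z a b c h1 h2 h3 := by
    rw [← sadj_rot r]
    exact D.tri _ _ _ a b c h1 h2 h3

def canon : List (List Bool) := [
  [true, true, true, true, true, true, false],
  [true, true, true, true, true, false, false],
  [true, true, true, true, false, true, false],
  [true, true, true, true, false, false, false],
  [true, true, true, false, true, true, false],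
  [true, true, true, false, true, false, false],
  [true, true, true, false, false, true, false],
  [true, true, true, false, false, false, false],
  [true, true, false, true, true, false, false],
  [true, true, false, true, false, true, false],
  [true, true, false, true, false, false, false],
  [true, true, false, false, true, false, false],
  [true, true, false, false, false, true, false],
  [true, true, false, false, false, false, false],
  [true, false, true, false, true, false, false],
  [true, false, true, false, false, false, false],
  [true, false, false, true, false, false, false],
  [true, false, false, false, false, false, false]]

theorem Dat.bad {V : Type} {e : SunV → Sym2 V} {v x y : ZMod 7 → V} {s : ZMod 7 → Bool}
    (D : Dat e v x y s) (h : [s 0, s 1, s 2, s 3, s 4, s 5, s 6] ∈ canon) : False := by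
  have h0 : (s 0 = true ∧ v 1 = v 0 ∧ x 1 = y 0) ∨ (s 0 = false ∧ v 1 = y 0 ∧ x 1 = v 0) := D.hs 0
  have h1 : (s 1 = true ∧ v 2 = v 1 ∧ x 2 = y 1) ∨ (s 1 = false ∧ v 2 = y 1 ∧ x 2 = v 1) := D.hs 1
  have h2 : (s 2 = true ∧ v 3 = v 2 ∧ x 3 = y 2) ∨ (s 2 = false ∧ v 3 = y 2 ∧ x 3 = v 2) := D.hs 2
  have h3 : (s 3 = true ∧ v 4 = v 3 ∧ x 4 = y 3) ∨ (s 3 = false ∧ v 4 = y 3 ∧ x 4 = v 3) := D.hs 3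
  have h4 : (s 4 = true ∧ v 5 = v 4 ∧ x 5 = y 4) ∨ (s 4 = false ∧ v 5 = y 4 ∧ x 5 = v 4) := D.hs 4
  have h5 : (s 5 = true ∧ v 6 = v 5 ∧ x 6 = y 5) ∨ (s 5 = false ∧ v 6 = y 5 ∧ x 6 = v 5) := D.hs 5
  have h6 : (s 6 = true ∧ v 0 = v 6 ∧ x 0 = y 6) ∨ (s 6 = false ∧ v 0 = y 6 ∧ x 0 = v 6) := D.hs 6
  simp only [canon, List.mem_cons, List.cons.injEq, List.not_mem_nil, or_false, and_true] at h
  rcases h with h | h | h | h | h | h | h | h | h | h | h | h | h | h | h | h | h | h <;>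
    obtain ⟨g0, g1, g2, g3, g4, g5, g6⟩ := h <;>
    simp only [g0, g1, g2, g3, g4, g5, g6, true_and, false_and, or_false, false_or,
      reduceCtorEq] at h0 h1 h2 h3 h4 h5 h6
  · exact D.nc 0 (by grind)
  · exact D.np 6 (by grind)
  · exact absurd (@D.inj (.inl 0) (.inl 5) (by rw [D.hc, D.hc, Sym2.eq_iff]; grind)) (by decide)
  · exact absurd (@D.inj (.inl 0) (.inr 5) (by rw [D.hc, D.hp, Sym2.eq_iff]; grind)) (by decide)
  · exact absurd (@D.inj (.inl 0) (.inl 4) (by rw [D.hc, D.hc, Sym2.eq_iff]; grind)) (by decide)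
  · exact absurd (@D.inj (.inl 4) (.inr 6) (by rw [D.hc, D.hp, Sym2.eq_iff]; grind)) (by decide)
  · exact absurd (@D.inj (.inl 0) (.inr 4) (by rw [D.hc, D.hp, Sym2.eq_iff]; grind)) (by decide)
  · exact absurd (@D.inj (.inr 4) (.inr 6) (by rw [D.hp, D.hp, Sym2.eq_iff]; grind)) (by decide)
  · exact absurd (@D.inj (.inl 3) (.inr 6) (by rw [D.hc, D.hp, Sym2.eq_iff]; grind)) (by decide)
  · exact absurd (D.tri (.inl 0) (.inl 3) (.inl 5) (x 0) (v 0) (v 3)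
      (by rw [D.hc, Sym2.eq_iff]; grind) (by rw [D.hc, Sym2.eq_iff]; grind) (by rw [D.hc, Sym2.eq_iff]; grind)) (by decide)
  · exact absurd (D.tri (.inl 0) (.inl 3) (.inr 5) (x 0) (v 0) (v 3)
      (by rw [D.hc, Sym2.eq_iff]; grind) (by rw [D.hc, Sym2.eq_iff]; grind) (by rw [D.hp, Sym2.eq_iff]; grind)) (by decide)
  · exact absurd (@D.inj (.inr 3) (.inr 6) (by rw [D.hp, D.hp, Sym2.eq_iff]; grind)) (by decide)
  · exact absurd (D.tri (.inl 0) (.inl 3) (.inr 4) (x 0) (v 0) (v 3)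
      (by rw [D.hc, Sym2.eq_iff]; grind) (by rw [D.hc, Sym2.eq_iff]; grind) (by rw [D.hp, Sym2.eq_iff]; grind)) (by decide)
  · exact absurd (D.tri (.inl 0) (.inr 3) (.inr 5) (x 0) (v 0) (y 3)
      (by rw [D.hc, Sym2.eq_iff]; grind) (by rw [D.hp, Sym2.eq_iff]; grind) (by rw [D.hp, Sym2.eq_iff]; grind)) (by decide)
  · exact absurd (D.tri (.inl 2) (.inl 4) (.inr 6) (x 2) (v 2) (v 4)
      (by rw [D.hc, Sym2.eq_iff]; grind) (by rw [D.hc, Sym2.eq_iff]; grind) (by rw [D.hp, Sym2.eq_iff]; grind)) (by decide)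
  · exact absurd (D.tri (.inl 2) (.inr 4) (.inr 6) (x 2) (v 2) (y 4)
      (by rw [D.hc, Sym2.eq_iff]; grind) (by rw [D.hp, Sym2.eq_iff]; grind) (by rw [D.hp, Sym2.eq_iff]; grind)) (by decide)
  · exact absurd (D.tri (.inl 0) (.inr 2) (.inr 5) (x 0) (v 0) (y 2)
      (by rw [D.hc, Sym2.eq_iff]; grind) (by rw [D.hp, Sym2.eq_iff]; grind) (by rw [D.hp, Sym2.eq_iff]; grind)) (by decide)
  · exact absurd (D.tri (.inr 2) (.inr 4) (.inr 6) (x 2) (y 2) (y 4)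
      (by rw [D.hp, Sym2.eq_iff]; grind) (by rw [D.hp, Sym2.eq_iff]; grind) (by rw [D.hp, Sym2.eq_iff]; grind)) (by decide)

theorem canon_cover : ∀ a b c d e f g : Bool,
    (a = b ∧ b = c ∧ c = d ∧ d = e ∧ e = f ∧ f = g) ∨
    [a, b, c, d, e, f, g] ∈ canon ∨ [b, c, d, e, f, g, a] ∈ canon ∨
    [c, d, e, f, g, a, b] ∈ canon ∨ [d, e, f, g, a, b, c] ∈ canon ∨
    [e, f, g, a, b, c, d] ∈ canon ∨ [f, g, a, b, c, d, e] ∈ canon ∨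
    [g, a, b, c, d, e, f] ∈ canon := by
  rintro (_ | _) (_ | _) (_ | _) (_ | _) (_ | _) (_ | _) (_ | _) <;> decide

theorem Dat.const {V : Type} {e : SunV → Sym2 V} {v x y : ZMod 7 → V} {s : ZMod 7 → Bool}
    (D : Dat e v x y s) : ∀ j, s j = s 0 := by
  rcases canon_cover (s 0) (s 1) (s 2) (s 3) (s 4) (s 5) (s 6) with h | h | h | h | h | h | h | h
  · have : ∀ j : ZMod 7, j = 0 ∨ j = 1 ∨ j = 2 ∨ j = 3 ∨ j = 4 ∨ j = 5 ∨ j = 6 := by decide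
    intro j
    rcases this j with rfl | rfl | rfl | rfl | rfl | rfl | rfl <;> grind
  · exact (D.bad h).elim
  · exact ((D.rot 1).bad h).elim
  · exact ((D.rot 2).bad h).elim
  · exact ((D.rot 3).bad h).elim
  · exact ((D.rot 4).bad h).elim
  · exact ((D.rot 5).bad h).elim
  · exact ((D.rot 6).bad h).elim

def epsW : SunV → Sym2 (Option (ZMod 7))
  | .inl j => s(none, some j)
  | .inr j => s(some j, some (j + 1))

def epsS : SunV → Sym2 (ZMod 7)
  | .inl j => s(j, j + 1)
  | .inr j => s(j, j + 2)

def IsType {V α : Type} (eps : SunV → Sym2 α) (e : SunV → Sym2 V) : Prop :=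
  ∃ φ : α → V, Function.Injective φ ∧ ∀ u, e u = Sym2.map φ (eps u)

theorem Dat.type {V : Type} {e : SunV → Sym2 V} {v x y : ZMod 7 → V} {s : ZMod 7 → Bool}
    (D : Dat e v x y s) : IsType epsW e ∨ IsType epsS e := by
  have hk := D.const
  cases h0 : s 0
  · right
    have hs : ∀ j, v (j+1) = y j ∧ x (j+1) = v j := by
      intro j
      have := D.hs j
      rw [hk j, h0] at this
      simpa using this
    have hc : ∀ j, e (.inl j) = s(x j, x (j + 1)) := by
      intro j
      rw [D.hc, (hs j).2, Sym2.eq_swap]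
    have hp : ∀ j, e (.inr j) = s(x j, x (j + 2)) := by
      intro j
      rw [D.hp, ← (hs j).1, ← (hs (j+1)).2, show j + 1 + 1 = j + 2 by ring]
    have n1 : ∀ j, x j ≠ x (j + 1) := fun j h => D.nc j (by rw [← (hs j).2, h])
    have n2 : ∀ j, x j ≠ x (j + 2) := fun j h => D.np j (by
      rw [← (hs j).1, ← (hs (j+1)).2, show j + 1 + 1 = j + 2 by ring]; exact h)
    have n3 : ∀ j, x j ≠ x (j + 3) := by
      intro j h
      have : e (.inl j) = e (.inr (j + 1)) := by
        rw [hc, hp, show j + 1 + 2 = j + 3 by ring, ← h, Sym2.eq_swap]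
      simpa using D.inj this
    refine ⟨x, ?_, ?_⟩
    · intro i j h
      have hd : ∀ i j : ZMod 7, i = j ∨ j = i + 1 ∨ j = i + 2 ∨ j = i + 3 ∨
        i = j + 1 ∨ i = j + 2 ∨ i = j + 3 := by decide
      rcases hd i j with hh | hh | hh | hh | hh | hh | hh
      · exact hh
      · subst hh; exact (n1 _ h).elim
      · subst hh; exact (n2 _ h).elim
      · subst hh; exact (n3 _ h).elim
      · subst hh; exact (n1 _ h.symm).elim
      · subst hh; exact (n2 _ h.symm).elim
      · subst hh; exact (n3 _ h.symm).elim
    · rintro (j | j)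
      · simp [epsS, hc]
      · simp [epsS, hp]
  · left
    have hs : ∀ j, v (j+1) = v j ∧ x (j+1) = y j := by
      intro j
      have := D.hs j
      rw [hk j, h0] at this
      simpa using this
    have hv : ∀ j, v j = v 0 := by
      have : ∀ n : ℕ, v (n : ZMod 7) = v 0 := by
        intro n
        induction n with
        | zero => simp
        | succ n ih => rw [Nat.cast_succ, (hs _).1, ih]
      intro j
      rw [← ZMod.natCast_zmod_val j]
      exact this _
    refine ⟨fun o => o.elim (v 0) x, ?_, ?_⟩
    · rintro (_ | i) (_ | j) h
      · rfl
      · exact (D.nc j ((hv j).trans h)).elim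
      · exact (D.nc i ((hv i).trans h.symm)).elim
      · have h' : x i = x j := h
        have : e (.inl i) = e (.inl j) := by rw [D.hc, D.hc, hv i, hv j, h']
        simpa using D.inj this
    · rintro (j | j)
      · simp [epsW, D.hc, hv j]
      · simp [epsW, D.hp, (hs j).2]

theorem not_both {V : Type} {e : SunV → Sym2 V} (h1 : IsType epsW e) (h2 : IsType epsS e) : False := by
  obtain ⟨φ, hφ, h1⟩ := h1
  obtain ⟨ψ, hψ, h2⟩ := h2
  have a0 : e (.inl 0) = s(φ none, φ (some 0)) := h1 _
  have a2 : e (.inl 2) = s(φ none, φ (some 2)) := h1 _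
  have b0 : e (.inl 0) = s(ψ 0, ψ 1) := h2 _
  have b2 : e (.inl 2) = s(ψ 2, ψ 3) := h2 _
  rw [a0, Sym2.eq_iff] at b0
  rw [a2, Sym2.eq_iff] at b2
  have d : (0 : ZMod 7) ≠ 2 ∧ (0 : ZMod 7) ≠ 3 ∧ (1 : ZMod 7) ≠ 2 ∧ (1 : ZMod 7) ≠ 3 := by decide
  have c1 := hψ.ne d.1
  have c2 := hψ.ne d.2.1
  have c3 := hψ.ne d.2.2.1
  have c4 := hψ.ne d.2.2.2
  grind

theorem toggle {V : Type} {e e' : SunV → Sym2 V} (g0 : e' (.inl 0) = e (.inl 4))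
    (g2 : e' (.inl 2) = e (.inr 5)) :
    (IsType epsW e → ¬ IsType epsW e') ∧ (IsType epsS e → ¬ IsType epsS e') := by
  constructor
  · rintro ⟨φ, hφ, h1⟩ ⟨ψ, hψ, h2⟩
    have a0 : e (.inl 4) = s(φ none, φ (some 4)) := h1 _
    have a2 : e (.inr 5) = s(φ (some 5), φ (some 6)) := h1 _
    have b0 : e' (.inl 0) = s(ψ none, ψ (some 0)) := h2 _
    have b2 : e' (.inl 2) = s(ψ none, ψ (some 2)) := h2 _
    rw [g0, a0, Sym2.eq_iff] at b0
    rw [g2, a2, Sym2.eq_iff] at b2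
    have c1 := hφ.ne (show (none : Option (ZMod 7)) ≠ some 5 by decide)
    have c2 := hφ.ne (show (none : Option (ZMod 7)) ≠ some 6 by decide)
    have c3 := hφ.ne (show (some 4 : Option (ZMod 7)) ≠ some 5 by decide)
    have c4 := hφ.ne (show (some 4 : Option (ZMod 7)) ≠ some 6 by decide)
    grind
  · rintro ⟨φ, hφ, h1⟩ ⟨ψ, hψ, h2⟩
    have a0 : e (.inl 4) = s(φ 4, φ 5) := h1 _
    have a2 : e (.inr 5) = s(φ 5, φ 0) := h1 _
    have b0 : e' (.inl 0) = s(ψ 0, ψ 1) := h2 _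
    have b2 : e' (.inl 2) = s(ψ 2, ψ 3) := h2 _
    rw [g0, a0, Sym2.eq_iff] at b0
    rw [g2, a2, Sym2.eq_iff] at b2
    have c1 := hψ.ne (show (0 : ZMod 7) ≠ 2 by decide)
    have c2 := hψ.ne (show (0 : ZMod 7) ≠ 3 by decide)
    have c3 := hψ.ne (show (1 : ZMod 7) ≠ 2 by decide)
    have c4 := hψ.ne (show (1 : ZMod 7) ≠ 3 by decide)
    grind

theorem wheel_adj : ∀ a b, (wheelGraph 7).Adj a b ↔ ∃ u, epsW u = s(a, b) := by
  have h1 : ∀ i : ZMod 7, i ≠ i + 1 := by decide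
  rintro (_ | i) (_ | j) <;> simp [wheelGraph, epsW, SimpleGraph.fromRel_adj]
  constructor
  · rintro ⟨_, rfl | rfl⟩
    · exact ⟨i, by simp⟩
    · exact ⟨j, by simp⟩
  · rintro ⟨l, ⟨rfl, rfl⟩ | ⟨rfl, rfl⟩⟩
    · exact ⟨h1 _, .inl rfl⟩
    · exact ⟨(h1 _).symm, .inr rfl⟩

theorem sq_adj : ∀ a b, (squaredCycleGraph 7).Adj a b ↔ ∃ u, epsS u = s(a, b) := by
  have h1 : ∀ i : ZMod 7, i ≠ i + 1 ∧ i ≠ i + 2 := by decide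
  intro i j
  simp only [squaredCycleGraph, epsS, SimpleGraph.fromRel_adj, Sum.exists, Sym2.eq_iff]
  constructor
  · rintro ⟨_, (rfl | rfl) | (rfl | rfl)⟩
    · exact .inl ⟨i, by simp⟩
    · exact .inr ⟨i, by simp⟩
    · exact .inl ⟨j, by simp⟩
    · exact .inr ⟨j, by simp⟩
  · rintro (⟨l, ⟨rfl, rfl⟩ | ⟨rfl, rfl⟩⟩ | ⟨l, ⟨rfl, rfl⟩ | ⟨rfl, rfl⟩⟩)
    · exact ⟨(h1 _).1, by simp⟩
    · exact ⟨(h1 _).1.symm, by simp⟩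
    · exact ⟨(h1 _).2, by simp⟩
    · exact ⟨(h1 _).2.symm, by simp⟩

theorem iso_of_type {V W α : Type} {G : SimpleGraph V} {H : SimpleGraph W} (f : TriLine G ≃g H)
    (m : SunV → W) (eps : SunV → Sym2 α) (A : SimpleGraph α)
    (hA : ∀ a b, A.Adj a b ↔ ∃ u, eps u = s(a, b)) (hcov : ∀ a, ∃ b, A.Adj a b)
    (ht : IsType eps (fun u => (f.symm (m u) : Sym2 V))) :
    Nonempty ((edgePre G f (Set.range m)).coe ≃g A) := by
  obtain ⟨φ, hφ, he⟩ := ht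
  have hadj : ∀ a b, (edgePre G f (Set.range m)).Adj a b ↔
      ∃ u, (f.symm (m u) : Sym2 V) = s(a, b) := by
    intro a b
    constructor
    · rintro ⟨_, e, h, u, hu⟩
      exact ⟨u, by rw [hu]; simpa using h⟩
    · rintro ⟨u, hu⟩
      refine ⟨?_, f.symm (m u), hu, u, by simp⟩
      have := (f.symm (m u)).2
      rwa [hu] at this
  have hadj2 : ∀ a b, (edgePre G f (Set.range m)).Adj (φ a) (φ b) ↔ A.Adj a b := by
    intro a b
    rw [hadj, hA]
    refine exists_congr fun u => ?_
    have := he u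
    simp only at this
    rw [this, ← Sym2.map_mk]
    exact (Sym2.map.injective hφ).eq_iff
  have hmem : ∀ a, φ a ∈ (edgePre G f (Set.range m)).verts := by
    intro a
    obtain ⟨b, hb⟩ := hcov a
    exact ((hadj2 a b).2 hb).fst_mem
  have hsurj : ∀ z ∈ (edgePre G f (Set.range m)).verts, ∃ a, φ a = z := by
    rintro z ⟨u, e, h, w, hw⟩
    have h2 := he w
    simp only at h2
    rw [hw, f.symm_apply_apply, h] at h2
    have : z ∈ Sym2.map φ (eps w) := by rw [← h2]; simp
    obtain ⟨a, _, ha⟩ := Sym2.mem_map.1 this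
    exact ⟨a, ha⟩
  refine ⟨RelIso.symm ⟨Equiv.ofBijective (fun a => ⟨φ a, hmem a⟩) ⟨?_, ?_⟩, ?_⟩⟩
  · intro a b h
    exact hφ (congrArg Subtype.val h)
  · rintro ⟨z, hz⟩
    obtain ⟨a, rfl⟩ := hsurj z hz
    exact ⟨a, rfl⟩
  · intro a b
    exact hadj2 a b

def tau : SunV → Option SunV := fun u =>
  if u = .inl 1 then some (.inl 5) else if u = .inl 0 then some (.inl 4) else
  if u = .inr 0 then some (.inr 4) else if u = .inl 2 then some (.inr 5) else
  if u = .inr 1 then some (.inl 6) else none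

theorem tau_none : ∀ u, ∀ w ∈ tau u, tau w = none := by decide +kernel

theorem tau_inj : ∀ u u', ∀ w ∈ tau u, w ∈ tau u' → u = u' := by decide +kernel

theorem tau_adj : ∀ u u', ∀ w ∈ tau u, ∀ w' ∈ tau u', sadj u u' = sadj w w' := by
  decide +kernel

/-- common neighbours of two ROOT vertices that are adjacent are ROOT vertices -/
theorem tau_root : ∀ u u' z, tau u ≠ none → tau u' ≠ none → sadj u u' = true → sadj u z = true →
    sadj u' z = true → tau z ≠ none := by decide +kernel

/-- same for NOT vertices -/
theorem tau_not : ∀ a b, ∀ u ∈ tau a, ∀ u' ∈ tau b, ∀ z, sadj u u' = true →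
    sadj u z = true → sadj u' z = true → ∃ c, tau c = some z := by decide +kernel

theorem sun_common : ∀ (j : ZMod 7) (z : SunV), sadj (.inl j) z = true →
    sadj (.inl (j + 1)) z = true → z = .inr j := by decide +kernel

def EE {k : ℕ} (a b : Fin (k + 1) × SunV) : Prop :=
  a = b ∨ ((b.1 : ℕ) = a.1 + 1 ∧ tau b.2 = some a.2) ∨ ((a.1 : ℕ) = b.1 + 1 ∧ tau a.2 = some b.2)

theorem EE.symm {k : ℕ} {a b : Fin (k + 1) × SunV} (h : EE a b) : EE b a := by
  unfold EE at *
  tauto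

theorem EE.trans {k : ℕ} {a b c : Fin (k + 1) × SunV} (h : EE a b) (h' : EE b c) : EE a c := by
  rcases h with rfl | ⟨h1, h2⟩ | ⟨h1, h2⟩
  · exact h'
  · rcases h' with rfl | ⟨h3, h4⟩ | ⟨h3, h4⟩
    · exact .inr (.inl ⟨h1, h2⟩)
    · have := tau_none _ _ h4
      rw [this] at h2; simp at h2
    · left
      rw [h2] at h4
      exact Prod.ext (Fin.ext (by omega)) (by simpa using h4)
  · rcases h' with rfl | ⟨h3, h4⟩ | ⟨h3, h4⟩
    · exact .inr (.inr ⟨h1, h2⟩)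
    · left
      exact Prod.ext (Fin.ext (by omega)) (tau_inj _ _ _ h2 h4)
    · have := tau_none _ _ h2
      rw [this] at h4; simp at h4

abbrev mk {k : ℕ} (i : Fin (k + 1)) (u : SunV) : Quotient (Relation.EqvGen.setoid (wireRel k)) :=
  Quotient.mk _ (i, u)

theorem tau_spec : ∀ u, ∀ w ∈ tau u, (w = .inl 5 ∧ u = .inl 1) ∨ (w = .inl 4 ∧ u = .inl 0) ∨
    (w = .inr 4 ∧ u = .inr 0) ∨ (w = .inr 5 ∧ u = .inl 2) ∨ (w = .inl 6 ∧ u = .inr 1) := by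
  decide +kernel

theorem tau_mk {k : ℕ} (i j : Fin (k + 1)) (u w : SunV) (h : (j : ℕ) = i + 1) (h' : tau w = some u) :
    mk i u = mk j w := by
  have hi : (i : ℕ) < k := by omega
  have e1 : i = (⟨i, hi⟩ : Fin k).castSucc := rfl
  have e2 : j = (⟨i, hi⟩ : Fin k).succ := Fin.ext h
  apply Quotient.sound
  refine Relation.EqvGen.rel _ _ ⟨⟨i, hi⟩, ?_⟩
  rw [← e1, ← e2]
  rcases tau_spec _ _ h' with ⟨rfl, rfl⟩ | ⟨rfl, rfl⟩ | ⟨rfl, rfl⟩ | ⟨rfl, rfl⟩ | ⟨rfl, rfl⟩ <;> simp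

theorem mk_eq {k : ℕ} {i j : Fin (k + 1)} {u w : SunV} (h : mk i u = mk j w) :
    EE (i, u) (j, w) := by
  have h' : Relation.EqvGen (wireRel k) (i, u) (j, w) := Quotient.exact h
  clear h
  generalize (i, u) = a at *
  generalize (j, w) = b at *
  induction h' with
  | rel x y h =>
    obtain ⟨l, h⟩ := h
    right; left
    rcases h with ⟨rfl, rfl⟩ | ⟨rfl, rfl⟩ | ⟨rfl, rfl⟩ | ⟨rfl, rfl⟩ | ⟨rfl, rfl⟩ <;>
      refine ⟨by simp, ?_⟩ <;> dsimp only <;> decide +kernel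
  | refl x => exact .inl rfl
  | symm x y _ ih => exact ih.symm
  | trans x y z _ _ ih1 ih2 => exact ih1.trans ih2

theorem mk_inj {k : ℕ} {i : Fin (k + 1)} {u w : SunV} (h : mk i u = mk i w) : u = w := by
  rcases mk_eq h with h | ⟨h, _⟩ | ⟨h, _⟩
  · exact (Prod.ext_iff.1 h).2
  · simp at h
  · simp at h

theorem wire_adj {k : ℕ} {x y} : (wireGraph k).Adj x y →
    ∃ i u w, mk i u = x ∧ mk i w = y ∧ sadj u w = true := by
  have hs : ∀ u w, sadj u w = sadj w u := by decide +kernel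
  have key : ∀ a b, (wireBase k).Adj a b → a.1 = b.1 ∧ sadj a.2 b.2 = true := by
    intro a b h
    rw [wireBase, SimpleGraph.fromRel_adj] at h
    simp only [sun_adj] at h
    rcases h with ⟨_, h | h⟩
    · exact h
    · exact ⟨h.1.symm, by rw [hs]; exact h.2⟩
  intro h
  rw [wireGraph, Glue, SimpleGraph.fromRel_adj] at h
  rcases h with ⟨_, ⟨⟨i, u⟩, ⟨j, w⟩, h, rfl, rfl⟩ | ⟨⟨i, u⟩, ⟨j, w⟩, h, rfl, rfl⟩⟩
  · obtain ⟨h1, h2⟩ := key _ _ h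
    simp only at h1 h2
    subst h1
    exact ⟨i, u, w, rfl, rfl, h2⟩
  · obtain ⟨h1, h2⟩ := key _ _ h
    simp only at h1 h2
    subst h1
    exact ⟨i, w, u, rfl, rfl, by rw [hs]; exact h2⟩

theorem adj_transfer {k : ℕ} {i j : Fin (k + 1)} {u w u' w' : SunV} (h : mk i u = mk j u')
    (h' : mk i w = mk j w') : sadj u w = sadj u' w' := by
  rcases mk_eq h with h | ⟨h, h1⟩ | ⟨h, h1⟩ <;> rcases mk_eq h' with g | ⟨g, g1⟩ | ⟨g, g1⟩ <;>
    simp only [Prod.mk.injEq] at h g <;> try omega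
  · rw [h.2, g.2]
  · exact (tau_adj _ _ _ h1 _ g1).symm
  · exact tau_adj _ _ _ h1 _ g1

theorem wire_sun {k : ℕ} (i : Fin (k + 1)) (u w : SunV) :
    (wireGraph k).Adj (mk i u) (mk i w) ↔ sadj u w = true := by
  constructor
  · intro h
    obtain ⟨j, u', w', h1, h2, h3⟩ := wire_adj h
    rw [← h3]
    exact (adj_transfer h1 h2).symm
  · intro h
    have hne : u ≠ w := by
      rintro rfl
      have : ∀ u, sadj u u = false := by decide +kernel
      rw [this] at h
      simp at h
    rw [wireGraph, Glue, SimpleGraph.fromRel_adj]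
    refine ⟨fun h => hne (mk_inj h), .inl ⟨(i, u), (i, w), ?_, rfl, rfl⟩⟩
    rw [wireBase, SimpleGraph.fromRel_adj]
    exact ⟨fun h => hne (Prod.ext_iff.1 h).2, .inl ⟨rfl, (sun_adj _ _).2 h⟩⟩

/-- If z is a common neighbour of two adjacent vertices of sun i, then z is in sun i. -/
theorem mem_sun {k : ℕ} (i : Fin (k + 1)) (u w : SunV) (huw : sadj u w = true) (z)
    (h : (wireGraph k).Adj (mk i u) z) (h' : (wireGraph k).Adj (mk i w) z) : ∃ t, z = mk i t := by
  obtain ⟨j, u', t, h1, h2, h3⟩ := wire_adj h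
  obtain ⟨l, w', t', g1, g2, g3⟩ := wire_adj h'
  have hz : mk j t = mk l t' := h2.trans g2.symm
  by_cases hj : j = i
  · subst hj; exact ⟨t, h2.symm⟩
  by_cases hl : l = i
  · subst hl; exact ⟨t', g2.symm⟩
  have hlj : l = j := by
    rcases mk_eq hz with hh | ⟨hh, _⟩ | ⟨hh, _⟩
    · exact (Prod.ext_iff.1 hh).1.symm
    all_goals
      exfalso
      have := mk_eq h1
      have := mk_eq g1
      simp only [EE, Prod.mk.injEq, hj, hl, false_and, false_or] at *
      omega
  subst hlj
  have ht : t = t' := mk_inj hz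
  subst ht
  have hu'w' : sadj u' w' = true := by rw [← huw]; exact adj_transfer h1 g1
  rcases mk_eq h1 with q | ⟨q, q'⟩ | ⟨q, q'⟩
  · exact absurd (Prod.ext_iff.1 q).1 hj
  · rcases mk_eq g1 with r | ⟨r, r'⟩ | ⟨r, r'⟩
    · exact absurd (Prod.ext_iff.1 r).1 hj
    · obtain ⟨a, ha⟩ := tau_not _ _ u' q' w' r' t hu'w' h3 g3
      refine ⟨a, ?_⟩
      rw [← h2]
      exact tau_mk _ _ _ _ q ha
    · simp only at q r; omega
  · rcases mk_eq g1 with r | ⟨r, r'⟩ | ⟨r, r'⟩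
    · exact absurd (Prod.ext_iff.1 r).1 hj
    · simp only at q r; omega
    · have := tau_root u' w' t (by simp at q'; simp [q']) (by simp at r'; simp [r']) hu'w' h3 g3
      obtain ⟨a, ha⟩ := Option.ne_none_iff_exists'.1 this
      refine ⟨a, ?_⟩
      rw [← h2]
      exact (tau_mk _ _ _ _ q ha).symm

theorem e_dat {k : ℕ} {V : Type} (G : SimpleGraph V) (f : TriLine G ≃g wireGraph k)
    (i : Fin (k + 1)) : ∃ v x y s, Dat (fun u => (f.symm (mk i u) : Sym2 V)) v x y s := by
  have hinj : Function.Injective (fun u => (f.symm (mk i u) : Sym2 V)) := by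
    intro a b h
    exact mk_inj (f.symm.injective (Subtype.ext h))
  have hadj : ∀ u w, (TriLine G).Adj (f.symm (mk i u)) (f.symm (mk i w)) ↔ sadj u w = true := by
    intro u w
    rw [f.symm.map_adj_iff, wire_sun]
  have htri : ∀ j : ZMod 7, ∃ v x y, (f.symm (mk i (.inl j)) : Sym2 V) = s(v, x) ∧
      (f.symm (mk i (.inl (j + 1))) : Sym2 V) = s(v, y) ∧
      (f.symm (mk i (.inr j)) : Sym2 V) = s(x, y) ∧ v ≠ x ∧ x ≠ y := by
    intro j
    have hj : sadj (.inl j) (.inl (j + 1)) = true := by simp [sadj]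
    obtain ⟨x, v, y, h1, h2, h3, h4, h5⟩ := (hadj _ _).2 hj
    refine ⟨v, x, y, h4.trans Sym2.eq_swap, h5, ?_, h1.ne', h3.ne⟩
    let e3 : G.edgeSet := ⟨s(x, y), h3⟩
    have a1 : (TriLine G).Adj (f.symm (mk i (.inl j))) e3 :=
      ⟨v, x, y, h1.symm, h3, h2, h4.trans Sym2.eq_swap, rfl⟩
    have a2 : (TriLine G).Adj (f.symm (mk i (.inl (j + 1)))) e3 :=
      ⟨v, y, x, h2, h3.symm, h1.symm, h5, Sym2.eq_swap⟩
    rw [← f.map_adj_iff, f.apply_symm_apply] at a1 a2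
    obtain ⟨t, ht⟩ := mem_sun i _ _ hj _ a1 a2
    rw [ht, wire_sun] at a1 a2
    have := sun_common _ _ a1 a2
    rw [← this, ← ht, f.symm_apply_apply]
  choose v x y H1 H2 H3 H4 H5 using htri
  have hst : ∀ j, ∃ b : Bool, (b = true ∧ v (j+1) = v j ∧ x (j+1) = y j) ∨
      (b = false ∧ v (j+1) = y j ∧ x (j+1) = v j) := by
    intro j
    have := (H1 (j + 1)).symm.trans (H2 j)
    rw [Sym2.eq_iff] at this
    rcases this with h | h
    · exact ⟨true, .inl ⟨rfl, h⟩⟩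
    · exact ⟨false, .inr ⟨rfl, h⟩⟩
  choose s hs using hst
  refine ⟨v, x, y, s, H1, H3, hs, hinj, H4, H5, ?_⟩
  intro u w z a b c h1 h2 h3
  rw [← hadj]
  have m1 := (f.symm (mk i u)).2
  have m2 := (f.symm (mk i w)).2
  have m3 := (f.symm (mk i z)).2
  rw [h1] at m1
  rw [h2] at m2
  rw [h3] at m3
  exact ⟨a, b, c, m1, m2, m3, h1, h2⟩

/-- For any preimage `G` of a wire `H₀, …, H_k` of 7-suns, each `T⁻¹(H_i)` is a 7-wheel
or a squared 7-cycle, and `T⁻¹(H_i)` is isomorphic to `T⁻¹(H₀)` iff `i` is even. -/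
theorem wire_preimages (k : ℕ) {V : Type} [Fintype V] (G : SimpleGraph V)
    (f : TriLine G ≃g wireGraph k) (i : Fin (k + 1)) :
    (Nonempty ((edgePre G f (wireVerts k i)).coe ≃g wheelGraph 7) ∨
      Nonempty ((edgePre G f (wireVerts k i)).coe ≃g squaredCycleGraph 7)) ∧
    (Nonempty ((edgePre G f (wireVerts k i)).coe ≃g (edgePre G f (wireVerts k 0)).coe) ↔
      Even (i : ℕ)) := by
  let e : Fin (k + 1) → SunV → Sym2 V := fun i u => (f.symm (mk i u) : Sym2 V)
  have ht : ∀ i, IsType epsW (e i) ∨ IsType epsS (e i) := by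
    intro i
    obtain ⟨v, x, y, s, D⟩ := e_dat G f i
    exact D.type
  have hW : ∀ i, IsType epsW (e i) →
      Nonempty ((edgePre G f (wireVerts k i)).coe ≃g wheelGraph 7) := by
    intro i h
    refine iso_of_type f (mk i) epsW _ wheel_adj ?_ h
    rintro (_ | j)
    · exact ⟨some 0, (wheel_adj _ _).2 ⟨.inl 0, rfl⟩⟩
    · exact ⟨none, (wheel_adj _ _).2 ⟨.inl j, Sym2.eq_swap⟩⟩
  have hS : ∀ i, IsType epsS (e i) →
      Nonempty ((edgePre G f (wireVerts k i)).coe ≃g squaredCycleGraph 7) := by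
    intro i h
    refine iso_of_type f (mk i) epsS _ sq_adj ?_ h
    intro j
    exact ⟨j + 1, (sq_adj _ _).2 ⟨.inl j, rfl⟩⟩
  have hne : ¬ Nonempty (wheelGraph 7 ≃g squaredCycleGraph 7) := by
    rintro ⟨g⟩
    have := Fintype.card_congr g.toEquiv
    simp [ZMod.card] at this
  refine ⟨(ht i).imp (hW i) (hS i), ?_⟩
  have htog : ∀ i : Fin k, (IsType epsW (e i.succ) ↔ ¬ IsType epsW (e i.castSucc)) := by
    intro i
    have g0 : e i.succ (.inl 0) = e i.castSucc (.inl 4) := by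
      have : mk i.castSucc (.inl 4) = mk i.succ (.inl 0) :=
        tau_mk _ _ _ _ (by simp) (by decide +kernel)
      simp only [e, this]
    have g2 : e i.succ (.inl 2) = e i.castSucc (.inr 5) := by
      have : mk i.castSucc (.inr 5) = mk i.succ (.inl 2) :=
        tau_mk _ _ _ _ (by simp) (by decide +kernel)
      simp only [e, this]
    have tg := toggle g0 g2
    have := ht i.succ
    have := ht i.castSucc
    tauto
  have hpar : ∀ n (hn : n < k + 1), (IsType epsW (e ⟨n, hn⟩) ↔ (IsType epsW (e 0) ↔ Even n)) := by
    intro n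
    induction n with
    | zero => intro hn; simp
    | succ n ih =>
      intro hn
      have h1 := htog ⟨n, by omega⟩
      have h2 := ih (by omega)
      simp only [Fin.succ_mk, Fin.castSucc_mk] at h1
      rw [h1, h2, Nat.even_add_one]
      tauto
  have hi := hpar i i.2
  rw [Fin.eta] at hi
  have hiff : Nonempty ((edgePre G f (wireVerts k i)).coe ≃g (edgePre G f (wireVerts k 0)).coe) ↔
      (IsType epsW (e i) ↔ IsType epsW (e 0)) := by
    constructor
    · rintro ⟨g⟩
      by_contra hc
      rcases ht i with h1 | h1 <;> rcases ht 0 with h2 | h2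
      · tauto
      · obtain ⟨a⟩ := hW i h1
        obtain ⟨b⟩ := hS 0 h2
        exact hne ⟨(a.symm.trans g).trans b⟩
      · obtain ⟨a⟩ := hS i h1
        obtain ⟨b⟩ := hW 0 h2
        exact hne ⟨(b.symm.trans g.symm).trans a⟩
      · exact hc ⟨fun h => (not_both h h1).elim, fun h => (not_both h h2).elim⟩
    · intro h
      rcases ht i with h1 | h1
      · obtain ⟨a⟩ := hW i h1
        obtain ⟨b⟩ := hW 0 (h.1 h1)
        exact ⟨a.trans b.symm⟩
      · have h2 : IsType epsS (e 0) := (ht 0).resolve_left fun h' => not_both (h.2 h') h1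
        obtain ⟨a⟩ := hS i h1
        obtain ⟨b⟩ := hS 0 h2
        exact ⟨a.trans b.symm⟩
  rw [hiff, hi]
  tauto
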